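/- arXiv:2506.09752 — 3 statements merged into one kernel-verified Lean document; each statement's English description precedes it below -/
import Mathlib

section
/- (Weighted lower bound for the Bopp–Podolsky energy of nonnegative densities.) Let K : ℝ³ → ℝ be defined by K(x) = (1 - exp(-‖x‖))/‖x‖ for x ≠ 0 and K(0) = 1, and set V(f,f) = ∫_{ℝ³}∫_{ℝ³} K(x-y) f(x) f(y) dx dy. Given α > 1/2, there exists a constant C > 0 (depending only on α) such that for every measurable f : ℝ³ → [0,∞), V(f,f) ≥ C · ( ∫_{ℝ³} f(x) / ( (1+‖x‖²)^{1/4} (1+|log ‖x‖|)^α ) dx )², where the inequality is understood in the extended nonnegative reals [0,∞]. -/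
open MeasureTheory Real
open scoped ENNReal Classical

noncomputable section

abbrev E3 := EuclideanSpace ℝ (Fin 3)

/-- Bopp–Podolsky kernel with `a = 1`. -/
def K1 (x : E3) : ℝ := if x = 0 then 1 else (1 - Real.exp (-‖x‖)) / ‖x‖

/-- Laplacian of `f` at `x`: sum of second derivatives along the coordinate directions. -/
def lap (f : E3 → ℝ) (x : E3) : ℝ :=
  ∑ i : Fin 3, fderiv ℝ (fun y => fderiv ℝ f y (EuclideanSpace.single i 1)) x
    (EuclideanSpace.single i 1)

/-- Bopp–Podolsky energy as an iterated lower integral, valued in `[0,∞]`. -/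
def Vlin (f g : E3 → ℝ) : ℝ≥0∞ :=
  ∫⁻ x, ∫⁻ y, ENNReal.ofReal (K1 (x - y) * f x * g y)

/-- Bopp–Podolsky energy as an iterated Bochner integral. -/
def Vr (f g : E3 → ℝ) : ℝ := ∫ x, ∫ y, K1 (x - y) * f x * g y

/-- `G` is the weak gradient of `u`. -/
def IsWeakGradient (u : E3 → ℝ) (G : E3 → E3) : Prop :=
  ∀ φ : E3 → ℝ, ContDiff ℝ (⊤ : ℕ∞) φ → HasCompactSupport φ → ∀ i : Fin 3,
    ∫ x, u x * fderiv ℝ φ x (EuclideanSpace.single i 1) = -∫ x, G x i * φ x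

/-- `h` is the weak Laplacian of `u`. -/
def IsWeakLaplacian (u : E3 → ℝ) (h : E3 → ℝ) : Prop :=
  ∀ φ : E3 → ℝ, ContDiff ℝ (⊤ : ℕ∞) φ → HasCompactSupport φ →
    ∫ x, u x * lap φ x = ∫ x, h x * φ x

/-! Let `μ = f dx` and `ρ x = 1 + log (1 + ‖x‖)`. The integral of `t ↦ μ {x | ρ x < t}` against
`t ^ (-α) * exp (-t / 2)` on `(1, ∞)` dominates the weighted mass, up to a constant, while the
integral of its square against `exp (-t)` is the energy of the kernel `exp (-max (ρ x) (ρ y))`,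
which lies below `(1 + ‖x - y‖)⁻¹`, itself a lower bound for the Bopp–Podolsky kernel.
Cauchy–Schwarz compares the two integrals, at the cost of the factor `∫_{t > 1} t ^ (-2α)`, which is
finite exactly when `α > 1 / 2`. -/

section TailIntegrals

variable {X : Type*} [MeasurableSpace X]

lemma sq_lintegral_mul_le {ν : Measure X} {f g : X → ℝ≥0∞} (hf : AEMeasurable f ν)
    (hg : AEMeasurable g ν) :
    (∫⁻ t, f t * g t ∂ν) ^ 2 ≤ (∫⁻ t, f t ^ 2 ∂ν) * ∫⁻ t, g t ^ 2 ∂ν := by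
  have holder := ENNReal.lintegral_mul_le_Lp_mul_Lq ν Real.HolderConjugate.two_two hf hg
  simp only [ENNReal.rpow_two] at holder
  have sq_sqrt (a : ℝ≥0∞) : (a ^ (1 / 2 : ℝ)) ^ 2 = a := by
    rw [← ENNReal.rpow_two, ← ENNReal.rpow_mul]
    norm_num
  calc (∫⁻ t, f t * g t ∂ν) ^ 2
      ≤ ((∫⁻ t, f t ^ 2 ∂ν) ^ (1 / 2 : ℝ) * (∫⁻ t, g t ^ 2 ∂ν) ^ (1 / 2 : ℝ)) ^ 2 := by
        gcongr
        exact holder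
    _ = (∫⁻ t, f t ^ 2 ∂ν) * ∫⁻ t, g t ^ 2 ∂ν := by rw [mul_pow, sq_sqrt, sq_sqrt]

variable {T : Type*} [LinearOrder T] [TopologicalSpace T] [OrderClosedTopology T]
  [MeasurableSpace T] [BorelSpace T] {μ : Measure X} {ρ : X → T}

lemma measurable_measure_lt : Measurable fun t : T => μ {x | ρ x < t} :=
  Monotone.measurable fun _ _ hst => measure_mono fun _ hx => lt_of_lt_of_le hx hst

variable [SecondCountableTopology T] [SFinite μ] {ν : Measure T} [SFinite ν]

lemma lintegral_measure_Ioi (hρ : Measurable ρ) :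
    ∫⁻ x, ν (Set.Ioi (ρ x)) ∂μ = ∫⁻ t, μ {x | ρ x < t} ∂ν := by
  have hs : MeasurableSet {p : X × T | ρ p.1 < p.2} :=
    measurableSet_lt (hρ.comp measurable_fst) measurable_snd
  exact (Measure.prod_apply hs).symm.trans (Measure.prod_apply_symm hs)

lemma lintegral_setLIntegral_Ioi (hρ : Measurable ρ) {φ : T → ℝ≥0∞} (hφ : Measurable φ) :
    ∫⁻ x, ∫⁻ t in Set.Ioi (ρ x), φ t ∂ν ∂μ = ∫⁻ t, φ t * μ {x | ρ x < t} ∂ν := by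
  simp only [← withDensity_apply φ measurableSet_Ioi]
  rw [lintegral_measure_Ioi hρ,
    lintegral_withDensity_eq_lintegral_mul ν hφ measurable_measure_lt]
  rfl

lemma lintegral_lintegral_setLIntegral_Ioi_max (hρ : Measurable ρ) {φ : T → ℝ≥0∞}
    (hφ : Measurable φ) :
    ∫⁻ x, ∫⁻ y, ∫⁻ t in Set.Ioi (max (ρ x) (ρ y)), φ t ∂ν ∂μ ∂μ =
      ∫⁻ t, φ t * μ {x | ρ x < t} ^ 2 ∂ν := by
  have hmax : Measurable fun p : X × X => max (ρ p.1) (ρ p.2) := by fun_prop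
  have tail_antitone : Antitone fun s : T => ∫⁻ t in Set.Ioi s, φ t ∂ν :=
    fun _ _ hst => lintegral_mono_set (Set.Ioi_subset_Ioi hst)
  have sublevel_prod (t : T) :
      (μ.prod μ) {p : X × X | max (ρ p.1) (ρ p.2) < t} = μ {x | ρ x < t} ^ 2 := by
    rw [sq, ← Measure.prod_prod]
    congr 1
    ext p
    exact max_lt_iff (α := T)
  rw [lintegral_lintegral (f := fun x y => ∫⁻ t in Set.Ioi (max (ρ x) (ρ y)), φ t ∂ν)
    (tail_antitone.measurable.comp hmax).aemeasurable, lintegral_setLIntegral_Ioi hmax hφ]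
  simp only [sublevel_prod]

theorem sq_lintegral_tail_le (hρ : Measurable ρ) {g h : T → ℝ≥0∞} (hg : Measurable g)
    (hh : Measurable h) :
    (∫⁻ x, ∫⁻ t in Set.Ioi (ρ x), g t * h t ∂ν ∂μ) ^ 2 ≤
      (∫⁻ t, g t ^ 2 ∂ν) * ∫⁻ x, ∫⁻ y, ∫⁻ t in Set.Ioi (max (ρ x) (ρ y)), h t ^ 2 ∂ν ∂μ ∂μ := by
  rw [lintegral_setLIntegral_Ioi hρ (φ := fun t => g t * h t) (hg.mul hh),
    lintegral_lintegral_setLIntegral_Ioi_max hρ (hh.pow_const 2)]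
  simp only [mul_assoc, ← mul_pow]
  exact sq_lintegral_mul_le hg.aemeasurable (hh.mul measurable_measure_lt).aemeasurable

end TailIntegrals

lemma setLIntegral_Ioi_exp_neg (s : ℝ) :
    ∫⁻ t in Set.Ioi s, ENNReal.ofReal (exp (-t)) = ENNReal.ofReal (exp (-s)) := by
  rw [← ofReal_integral_eq_lintegral_ofReal (integrableOn_exp_neg_Ioi s)
    (ae_of_all _ fun t => (exp_pos _).le), integral_exp_neg_Ioi]

lemma setLIntegral_Ioi_one_rpow_neg {β : ℝ} (hβ : 1 < β) :
    ∫⁻ t in Set.Ioi (1 : ℝ), ENNReal.ofReal (t ^ (-β)) = ENNReal.ofReal (β - 1)⁻¹ := by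
  have rpow_neg_nonneg : 0 ≤ᵐ[volume.restrict (Set.Ioi (1 : ℝ))] fun t => t ^ (-β) := by
    filter_upwards [self_mem_ae_restrict measurableSet_Ioi] with t ht
    exact rpow_nonneg (zero_le_one.trans (le_of_lt ht)) _
  rw [← ofReal_integral_eq_lintegral_ofReal
    (integrableOn_Ioi_rpow_of_lt (by linarith) one_pos) rpow_neg_nonneg,
    integral_Ioi_rpow_of_lt (by linarith) one_pos, one_rpow, neg_div, ← div_neg, one_div,
    neg_add, neg_neg, sub_eq_add_neg]

/-- The tail `∫_s^∞ t^{-α} e^{-t/2} dt`, which at `s = 1 + log (1 + r)` dominates the radial weight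
up to a constant. The integrand is kept as a product because Cauchy–Schwarz splits it there. -/
def expTail (α s : ℝ) : ℝ≥0∞ :=
  ∫⁻ t in Set.Ioi s, ENNReal.ofReal (t ^ (-α)) * ENNReal.ofReal (exp (-t / 2))

lemma le_expTail {α s : ℝ} (hα : 0 ≤ α) (hs : 0 ≤ s) :
    ENNReal.ofReal ((s + 1) ^ (-α) * exp (-(s + 1) / 2)) ≤ expTail α s := by
  calc ENNReal.ofReal ((s + 1) ^ (-α) * exp (-(s + 1) / 2))
      = ∫⁻ _ in Set.Ioc s (s + 1),
          ENNReal.ofReal ((s + 1) ^ (-α)) * ENNReal.ofReal (exp (-(s + 1) / 2)) := by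
        rw [setLIntegral_const, Real.volume_Ioc, add_sub_cancel_left, ENNReal.ofReal_one, mul_one,
          ENNReal.ofReal_mul (by positivity)]
    _ ≤ ∫⁻ t in Set.Ioc s (s + 1),
          ENNReal.ofReal (t ^ (-α)) * ENNReal.ofReal (exp (-t / 2)) := by
        refine setLIntegral_mono' measurableSet_Ioc fun t ht => ?_
        gcongr ?_ * ENNReal.ofReal (exp (-?_ / 2))
        · exact ENNReal.ofReal_le_ofReal
            (rpow_le_rpow_of_nonpos (hs.trans_lt ht.1) ht.2 (neg_nonpos.mpr hα))
        · exact ht.2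
    _ ≤ expTail α s := lintegral_mono_set Set.Ioc_subset_Ioi_self

/-- The logarithmic radius `1 + log (1 + r)`: distances are compared on this scale, on which
`1 / (1 + r)` decays like `exp (-t)`. The leading `1` keeps it in `[1, ∞)`. -/
def logScale (r : ℝ) : ℝ := 1 + log (1 + r)

/-- The reciprocal `(1 + r²)^{1/4} (1 + |log r|)^α` of the radial weight in the lower bound. The
convention `Real.log 0 = 0` gives it the value `1` at `r = 0`. -/
def logWeight (α r : ℝ) : ℝ := (1 + r ^ 2) ^ ((1 : ℝ) / 4) * (1 + |log r|) ^ α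

lemma one_le_logScale {r : ℝ} (hr : 0 ≤ r) : 1 ≤ logScale r :=
  le_add_of_nonneg_right (log_nonneg (le_add_of_nonneg_right hr))

lemma exp_logScale {r : ℝ} (hr : 0 ≤ r) : exp (logScale r) = exp 1 * (1 + r) := by
  rw [logScale, exp_add, exp_log (by linarith)]

lemma exp_half_logScale_add_one_le {r : ℝ} (hr : 0 ≤ r) :
    exp ((logScale r + 1) / 2) ≤ 4 * (1 + r ^ 2) ^ ((1 : ℝ) / 4) := by
  have exp_pow_four : exp ((logScale r + 1) / 2) ^ 4 = exp 1 ^ 4 * (1 + r) ^ 2 := by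
    calc exp ((logScale r + 1) / 2) ^ 4 = (exp (logScale r) * exp 1) ^ 2 := by
          rw [← exp_add, ← exp_nat_mul, ← exp_nat_mul]
          ring_nf
      _ = exp 1 ^ 4 * (1 + r) ^ 2 := by rw [exp_logScale hr]; ring
  have root_pow_four : ((1 + r ^ 2) ^ ((1 : ℝ) / 4)) ^ 4 = 1 + r ^ 2 := by
    rw [← rpow_mul_natCast (by positivity)]
    norm_num
  refine (pow_le_pow_iff_left₀ (exp_pos _).le (by positivity) four_ne_zero).mp ?_
  calc exp ((logScale r + 1) / 2) ^ 4 = exp 1 ^ 4 * (1 + r) ^ 2 := exp_pow_four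
    _ ≤ 3 ^ 4 * (2 * (1 + r ^ 2)) := by
        gcongr
        · exact exp_one_lt_three.le
        · linarith [sq_nonneg (1 - r)]
    _ ≤ (4 * (1 + r ^ 2) ^ ((1 : ℝ) / 4)) ^ 4 := by
        rw [mul_pow, root_pow_four]
        linarith [sq_nonneg r]

lemma logScale_add_one_le {r : ℝ} (hr : 0 ≤ r) : logScale r + 1 ≤ 3 * (1 + |log r|) := by
  have log_two_le : log 2 ≤ 1 := by linarith [log_two_lt_d9]
  suffices log (1 + r) ≤ 1 + |log r| by
    rw [logScale]
    linarith [abs_nonneg (log r)]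
  rcases le_total r 1 with hr₁ | hr₁
  · calc log (1 + r) ≤ log 2 := log_le_log (by linarith) (by linarith)
      _ ≤ 1 + |log r| := by linarith [abs_nonneg (log r)]
  · calc log (1 + r) ≤ log (2 * r) := log_le_log (by linarith) (by linarith)
      _ = log 2 + log r := log_mul two_ne_zero (by linarith)
      _ ≤ 1 + |log r| := add_le_add log_two_le (le_abs_self _)

lemma inv_logWeight_le {α r : ℝ} (hα : 0 ≤ α) (hr : 0 ≤ r) :
    (logWeight α r)⁻¹ ≤
      4 * 3 ^ α * ((logScale r + 1) ^ (-α) * exp (-(logScale r + 1) / 2)) := by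
  have scale_pos : 0 < logScale r + 1 := by linarith [one_le_logScale hr]
  have rpow_le : (logScale r + 1) ^ α ≤ 3 ^ α * (1 + |log r|) ^ α := by
    rw [← mul_rpow zero_le_three (by positivity)]
    exact rpow_le_rpow scale_pos.le (logScale_add_one_le hr) hα
  rw [rpow_neg scale_pos.le, neg_div, exp_neg, ← mul_inv, ← div_eq_mul_inv,
    inv_le_iff_one_le_mul₀ (by unfold logWeight; positivity), div_mul_eq_mul_div,
    one_le_div (by positivity)]
  calc (logScale r + 1) ^ α * exp ((logScale r + 1) / 2)
      ≤ (3 ^ α * (1 + |log r|) ^ α) * (4 * (1 + r ^ 2) ^ ((1 : ℝ) / 4)) :=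
        mul_le_mul rpow_le (exp_half_logScale_add_one_le hr) (exp_pos _).le (by positivity)
    _ = 4 * 3 ^ α * logWeight α r := by rw [logWeight]; ring

lemma ofReal_inv_logWeight_le {α r : ℝ} (hα : 0 ≤ α) (hr : 0 ≤ r) :
    ENNReal.ofReal (logWeight α r)⁻¹ ≤
      ENNReal.ofReal (4 * 3 ^ α) * expTail α (logScale r) := by
  refine (ENNReal.ofReal_le_ofReal (inv_logWeight_le hα hr)).trans ?_
  rw [ENNReal.ofReal_mul (by positivity)]
  gcongr
  exact le_expTail hα (zero_le_one.trans (one_le_logScale hr))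

section Energy

variable {E : Type*} [SeminormedAddCommGroup E]

lemma exp_neg_max_logScale_le (x y : E) :
    exp (-max (logScale ‖x‖) (logScale ‖y‖)) ≤ (1 + ‖x - y‖)⁻¹ := by
  have le_exp_max {z : E} (hz : logScale ‖z‖ ≤ max (logScale ‖x‖) (logScale ‖y‖)) :
      2 * (1 + ‖z‖) ≤ exp (max (logScale ‖x‖) (logScale ‖y‖)) := by
    calc 2 * (1 + ‖z‖) ≤ exp 1 * (1 + ‖z‖) := by gcongr; exact exp_one_gt_two.le
      _ = exp (logScale ‖z‖) := (exp_logScale (norm_nonneg z)).symm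
      _ ≤ exp (max (logScale ‖x‖) (logScale ‖y‖)) := exp_le_exp.mpr hz
  rw [exp_neg]
  gcongr
  linarith [norm_sub_le x y, le_exp_max (le_max_left _ _), le_exp_max (le_max_right _ _)]

variable [MeasurableSpace E] [OpensMeasurableSpace E]

theorem sq_lintegral_expTail_logScale_le {α : ℝ} (hα : 1 / 2 < α) (μ : Measure E) [SFinite μ] :
    (∫⁻ x, expTail α (logScale ‖x‖) ∂μ) ^ 2 ≤
      ENNReal.ofReal (2 * α - 1)⁻¹ * ∫⁻ x, ∫⁻ y, ENNReal.ofReal (1 + ‖x - y‖)⁻¹ ∂μ ∂μ := by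
  have restrict_Ioi {s : ℝ} (hs : 1 ≤ s) :
      (volume.restrict (Set.Ioi (1 : ℝ))).restrict (Set.Ioi s) = volume.restrict (Set.Ioi s) :=
    Measure.restrict_restrict_of_subset (Set.Ioi_subset_Ioi hs)
  have tails := sq_lintegral_tail_le (μ := μ) (ν := volume.restrict (Set.Ioi (1 : ℝ)))
    (ρ := fun x => logScale ‖x‖) (g := fun t => ENNReal.ofReal (t ^ (-α)))
    (h := fun t => ENNReal.ofReal (exp (-t / 2))) (by unfold logScale; fun_prop)
    (by fun_prop) (by fun_prop)
  simp only [restrict_Ioi (one_le_logScale (norm_nonneg _)),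
    restrict_Ioi (le_max_of_le_left (one_le_logScale (norm_nonneg _)))] at tails
  have rpow_sq : ∫⁻ t in Set.Ioi (1 : ℝ), ENNReal.ofReal (t ^ (-α)) ^ 2 =
      ENNReal.ofReal (2 * α - 1)⁻¹ := by
    rw [← setLIntegral_Ioi_one_rpow_neg (by linarith)]
    refine setLIntegral_congr_fun measurableSet_Ioi fun t (ht : 1 < t) => ?_
    have ht₀ : 0 ≤ t := by linarith
    rw [← ENNReal.ofReal_pow (by positivity), ← rpow_mul_natCast ht₀]
    ring_nf
  have exp_sq (t : ℝ) : ENNReal.ofReal (exp (-t / 2)) ^ 2 = ENNReal.ofReal (exp (-t)) := by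
    rw [← ENNReal.ofReal_pow (exp_pos _).le, ← exp_nat_mul]
    ring_nf
  simp only [rpow_sq, exp_sq, setLIntegral_Ioi_exp_neg] at tails
  refine tails.trans ?_
  gcongr with x y
  exact exp_neg_max_logScale_le x y

theorem energy_weighted_lower_bound_general {α : ℝ} (hα : 1 / 2 < α) (μ : Measure E) [SFinite μ]
    {K : E → ℝ} (hK : ∀ x, (1 + ‖x‖)⁻¹ ≤ K x) :
    ENNReal.ofReal ((2 * α - 1) / (4 * 3 ^ α) ^ 2) *
        (∫⁻ x, ENNReal.ofReal (logWeight α ‖x‖)⁻¹ ∂μ) ^ 2 ≤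
      ∫⁻ x, ∫⁻ y, ENNReal.ofReal (K (x - y)) ∂μ ∂μ := by
  set c : ℝ := 4 * 3 ^ α
  set T : ℝ≥0∞ := ∫⁻ x, expTail α (logScale ‖x‖) ∂μ
  have hc : 0 < c := by positivity
  have two_mul_sub_one_pos : 0 < 2 * α - 1 := by linarith
  have weight_le : ∫⁻ x, ENNReal.ofReal (logWeight α ‖x‖)⁻¹ ∂μ ≤ ENNReal.ofReal c * T := by
    rw [← lintegral_const_mul' _ _ ENNReal.ofReal_ne_top]
    exact lintegral_mono fun x => ofReal_inv_logWeight_le (by linarith) (norm_nonneg x)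
  calc ENNReal.ofReal ((2 * α - 1) / c ^ 2) *
        (∫⁻ x, ENNReal.ofReal (logWeight α ‖x‖)⁻¹ ∂μ) ^ 2
      ≤ ENNReal.ofReal ((2 * α - 1) / c ^ 2) * (ENNReal.ofReal c * T) ^ 2 := by gcongr
    _ = ENNReal.ofReal (2 * α - 1) * T ^ 2 := by
        rw [mul_pow (ENNReal.ofReal c), ← mul_assoc, ← ENNReal.ofReal_pow hc.le,
          ← ENNReal.ofReal_mul (by positivity), div_mul_cancel₀ _ (by positivity)]
    _ ≤ ENNReal.ofReal (2 * α - 1) * (ENNReal.ofReal (2 * α - 1)⁻¹ *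
          ∫⁻ x, ∫⁻ y, ENNReal.ofReal (1 + ‖x - y‖)⁻¹ ∂μ ∂μ) := by
        gcongr
        exact sq_lintegral_expTail_logScale_le hα μ
    _ = ∫⁻ x, ∫⁻ y, ENNReal.ofReal (1 + ‖x - y‖)⁻¹ ∂μ ∂μ := by
        rw [← mul_assoc, ← ENNReal.ofReal_mul two_mul_sub_one_pos.le,
          mul_inv_cancel₀ two_mul_sub_one_pos.ne', ENNReal.ofReal_one, one_mul]
    _ ≤ ∫⁻ x, ∫⁻ y, ENNReal.ofReal (K (x - y)) ∂μ ∂μ := by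
        gcongr
        exact hK _

end Energy

lemma inv_one_add_norm_le_K1 (x : E3) : (1 + ‖x‖)⁻¹ ≤ K1 x := by
  rcases eq_or_ne x 0 with rfl | hx
  · simp [K1]
  · have norm_pos : 0 < ‖x‖ := norm_pos_iff.mpr hx
    have exp_neg_le : exp (-‖x‖) ≤ (1 + ‖x‖)⁻¹ := by
      rw [exp_neg]
      gcongr
      linarith [add_one_le_exp ‖x‖]
    rw [K1, if_neg hx, le_div_iff₀ norm_pos]
    calc (1 + ‖x‖)⁻¹ * ‖x‖ = 1 - (1 + ‖x‖)⁻¹ := by field_simp; ring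
      _ ≤ 1 - exp (-‖x‖) := by gcongr

lemma lintegral_withDensity_ofReal {X : Type*} [MeasurableSpace X] {μ : Measure X} {f : X → ℝ}
    (hf : Measurable f) (φ : X → ℝ≥0∞) :
    ∫⁻ x, φ x ∂(μ.withDensity fun x => ENNReal.ofReal (f x)) =
      ∫⁻ x, ENNReal.ofReal (f x) * φ x ∂μ :=
  lintegral_withDensity_eq_lintegral_mul_non_measurable _ hf.ennreal_ofReal
    (ae_of_all _ fun _ => ENNReal.ofReal_lt_top) φ

lemma Vlin_self_eq_lintegral_withDensity {f : E3 → ℝ} (hf : Measurable f) (hf₀ : ∀ x, 0 ≤ f x) :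
    Vlin f f = ∫⁻ x, ∫⁻ y, ENNReal.ofReal (K1 (x - y))
      ∂(volume.withDensity fun x => ENNReal.ofReal (f x))
      ∂(volume.withDensity fun x => ENNReal.ofReal (f x)) := by
  simp only [lintegral_withDensity_ofReal hf, Vlin]
  refine lintegral_congr fun x => ?_
  rw [← lintegral_const_mul' _ _ ENNReal.ofReal_ne_top]
  refine lintegral_congr fun y => ?_
  have K1_nonneg : 0 ≤ K1 (x - y) := le_trans (by positivity) (inv_one_add_norm_le_K1 (x - y))
  rw [mul_assoc, ENNReal.ofReal_mul K1_nonneg, ENNReal.ofReal_mul (hf₀ x)]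
  ring

/-- Weighted lower bound for the Bopp–Podolsky energy of nonnegative densities:
for `α > 1/2` there is `C > 0` such that for every measurable `f ≥ 0`,
`V(f,f) ≥ C (∫ f(x) / ((1+‖x‖²)^{1/4} (1+|log ‖x‖|)^α) dx)²` in `[0,∞]`. -/
theorem energy_weighted_lower_bound (α : ℝ) (hα : 1 / 2 < α) :
    ∃ C : ℝ, 0 < C ∧ ∀ f : E3 → ℝ, Measurable f → (∀ x, 0 ≤ f x) →
      ENNReal.ofReal C *
        (∫⁻ x, ENNReal.ofReal
          (f x / (((1 : ℝ) + ‖x‖ ^ 2) ^ ((1 : ℝ) / 4) * (1 + |Real.log ‖x‖|) ^ α))) ^ 2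
        ≤ Vlin f f := by
  refine ⟨(2 * α - 1) / (4 * 3 ^ α) ^ 2, div_pos (by linarith) (by positivity),
    fun f hf hf₀ => ?_⟩
  simp only [Vlin_self_eq_lintegral_withDensity hf hf₀, div_eq_mul_inv (f _),
    ENNReal.ofReal_mul (hf₀ _), ← lintegral_withDensity_ofReal hf]
  exact energy_weighted_lower_bound_general hα _ inv_one_add_norm_le_K1
end
end

section
/- (General lower bound for the Bopp–Podolsky energy, arbitrary parameter a.) Let a > 0 and define K_a : ℝ³ → ℝ by K_a(x) = (1 - exp(-‖x‖/a))/‖x‖ for x ≠ 0 and K_a(0) = 1/a, and set V_a(f,g) = ∫_{ℝ³}∫_{ℝ³} K_a(x-y) f(x) g(y) dx dy. Given α > 1/2, there exists a constant C = C(a, α) > 0 such that for every measurable u : ℝ³ → ℝ, V_a(u², u²) ≥ C · ( ∫_{ℝ³} u(x)² / ( (1+‖x‖²)^{1/4} (1+|log ‖x‖|)^α ) dx )², where the inequality is understood in the extended nonnegative reals [0,∞]. -/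
open MeasureTheory Real
open scoped ENNReal Classical

noncomputable section

/-- Bopp–Podolsky kernel with parameter `a`. -/
def Ka (a : ℝ) (x : E3) : ℝ := if x = 0 then 1 / a else (1 - Real.exp (-‖x‖ / a)) / ‖x‖

/-- Bopp–Podolsky energy with parameter `a`, as an iterated lower integral in `[0,∞]`. -/
def Vlina (a : ℝ) (f g : E3 → ℝ) : ℝ≥0∞ :=
  ∫⁻ x, ∫⁻ y, ENNReal.ofReal (Ka a (x - y) * f x * g y)

/-!
Cut the space into the shells `e ^ n ≤ 1 + ‖x‖ < e ^ (n + 1)` and keep only the interaction of each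
shell with itself. On the `n`-th shell the kernel is at least a constant times `e ^ (-n)`, so the
energy controls `∑ₙ (e ^ (-n / 2) mₙ)²`, where `mₙ` is the mass of the shell. The weight is at most
a constant times `e ^ (-n / 2) (1 + n) ^ (-α)` there, and Cauchy–Schwarz over `n` concludes because
`∑ₙ (1 + n) ^ (-2α)` converges for `α > 1 / 2`.
-/

section CauchySchwarzOnFibers

lemma ennreal_sq_tsum_mul_le {ι : Type*} (f g : ι → ℝ≥0∞) :
    (∑' i, f i * g i) ^ 2 ≤ (∑' i, f i ^ 2) * ∑' i, g i ^ 2 := by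
  let : MeasurableSpace ι := ⊤
  have holder := ENNReal.lintegral_mul_le_Lp_mul_Lq Measure.count Real.HolderConjugate.two_two
    (measurable_from_top (f := f)).aemeasurable (measurable_from_top (f := g)).aemeasurable
  simp only [lintegral_count, Pi.mul_apply, ENNReal.rpow_two] at holder
  calc (∑' i, f i * g i) ^ 2
      ≤ ((∑' i, f i ^ 2) ^ (1 / 2 : ℝ) * (∑' i, g i ^ 2) ^ (1 / 2 : ℝ)) ^ 2 := by gcongr
    _ = (∑' i, f i ^ 2) * ∑' i, g i ^ 2 := by
      rw [mul_pow, ← ENNReal.rpow_mul_natCast, ← ENNReal.rpow_mul_natCast]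
      norm_num

variable {X ι : Type*} [MeasurableSpace X] {μ : Measure X}

lemma mul_sq_setLIntegral_le {s : Set X} (hs : MeasurableSet s) {κ : ℝ≥0∞} {K : X → X → ℝ≥0∞}
    (hK : ∀ x ∈ s, ∀ y ∈ s, κ ≤ K x y) (f : X → ℝ≥0∞) :
    κ * (∫⁻ x in s, f x ∂μ) ^ 2 ≤ ∫⁻ x in s, ∫⁻ y in s, K x y * f x * f y ∂μ ∂μ := by
  calc κ * (∫⁻ x in s, f x ∂μ) ^ 2
      = κ * (∫⁻ y in s, f y ∂μ) * ∫⁻ x in s, f x ∂μ := by ring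
    _ ≤ ∫⁻ x in s, κ * (∫⁻ y in s, f y ∂μ) * f x ∂μ := lintegral_const_mul_le _ _
    _ = ∫⁻ x in s, κ * f x * (∫⁻ y in s, f y ∂μ) ∂μ := by simp only [mul_right_comm]
    _ ≤ ∫⁻ x in s, ∫⁻ y in s, κ * f x * f y ∂μ ∂μ :=
      lintegral_mono fun x => lintegral_const_mul_le _ _
    _ ≤ ∫⁻ x in s, ∫⁻ y in s, K x y * f x * f y ∂μ ∂μ :=
      setLIntegral_mono' hs fun x hx => setLIntegral_mono' hs fun y hy => by
        gcongr
        exact hK x hx y hy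

variable [Countable ι] [MeasurableSpace ι] [MeasurableSingletonClass ι] {i : X → ι}

lemma lintegral_eq_tsum_fiber (hi : Measurable i) (f : X → ℝ≥0∞) :
    ∫⁻ x, f x ∂μ = ∑' n, ∫⁻ x in i ⁻¹' {n}, f x ∂μ := by
  rw [← lintegral_iUnion (fun n => hi (measurableSet_singleton n)) (pairwise_disjoint_fiber i),
    ← Set.preimage_iUnion, Set.iUnion_of_singleton, Set.preimage_univ, Measure.restrict_univ]

lemma lintegral_mul_le_tsum_fiber (hi : Measurable i) {b : ι → ℝ≥0∞} (hb : ∀ n, b n ≠ ∞)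
    {w : X → ℝ≥0∞} (hw : ∀ x, w x ≤ b (i x)) (f : X → ℝ≥0∞) :
    ∫⁻ x, w x * f x ∂μ ≤ ∑' n, b n * ∫⁻ x in i ⁻¹' {n}, f x ∂μ := by
  rw [lintegral_eq_tsum_fiber hi]
  refine ENNReal.tsum_le_tsum fun n => ?_
  rw [← lintegral_const_mul' _ _ (hb n)]
  refine setLIntegral_mono' (hi (measurableSet_singleton n)) fun x hx => ?_
  gcongr
  exact (hw x).trans_eq (congrArg b hx)

lemma tsum_mul_sq_fiber_le_energy (hi : Measurable i) {κ : ι → ℝ≥0∞} {K : X → X → ℝ≥0∞}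
    (hK : ∀ x y, i x = i y → κ (i x) ≤ K x y) (f : X → ℝ≥0∞) :
    ∑' n, κ n * (∫⁻ x in i ⁻¹' {n}, f x ∂μ) ^ 2 ≤ ∫⁻ x, ∫⁻ y, K x y * f x * f y ∂μ ∂μ := by
  rw [lintegral_eq_tsum_fiber hi]
  refine ENNReal.tsum_le_tsum fun n => ?_
  have hK_fiber : ∀ x ∈ i ⁻¹' {n}, ∀ y ∈ i ⁻¹' {n}, κ n ≤ K x y := by
    rintro x rfl y hy
    exact hK x y (Eq.symm hy)
  exact (mul_sq_setLIntegral_le (hi (measurableSet_singleton n)) hK_fiber f).trans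
    (lintegral_mono fun x => setLIntegral_le_lintegral _ _)

theorem sq_lintegral_mul_le_tsum_sq_mul_energy (hi : Measurable i) {p q : ι → ℝ≥0∞}
    (hpq : ∀ n, q n * p n ≠ ∞) {w : X → ℝ≥0∞} (hw : ∀ x, w x ≤ q (i x) * p (i x))
    {K : X → X → ℝ≥0∞} (hK : ∀ x y, i x = i y → p (i x) ^ 2 ≤ K x y) (f : X → ℝ≥0∞) :
    (∫⁻ x, w x * f x ∂μ) ^ 2 ≤
      (∑' n, q n ^ 2) * ∫⁻ x, ∫⁻ y, K x y * f x * f y ∂μ ∂μ := by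
  set m : ι → ℝ≥0∞ := fun n => ∫⁻ x in i ⁻¹' {n}, f x ∂μ
  calc (∫⁻ x, w x * f x ∂μ) ^ 2
      ≤ (∑' n, q n * (p n * m n)) ^ 2 := by
        gcongr
        simpa only [mul_assoc] using lintegral_mul_le_tsum_fiber hi hpq hw f
    _ ≤ (∑' n, q n ^ 2) * ∑' n, (p n * m n) ^ 2 := ennreal_sq_tsum_mul_le _ _
    _ ≤ (∑' n, q n ^ 2) * ∫⁻ x, ∫⁻ y, K x y * f x * f y ∂μ ∂μ := by
        gcongr
        simpa only [mul_pow] using tsum_mul_sq_fiber_le_energy hi hK f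

theorem sq_lintegral_ofReal_mul_le_tsum_sq_mul_energy (hi : Measurable i) {p q : ι → ℝ}
    (hp : ∀ n, 0 ≤ p n) (hq : ∀ n, 0 ≤ q n) (hq_summable : Summable fun n => q n ^ 2)
    {w : X → ℝ} (hw : ∀ x, w x ≤ q (i x) * p (i x))
    {K : X → X → ℝ} (hK : ∀ x y, i x = i y → p (i x) ^ 2 ≤ K x y) {f : X → ℝ} (hf : ∀ x, 0 ≤ f x) :
    (∫⁻ x, ENNReal.ofReal (w x * f x) ∂μ) ^ 2 ≤
      ENNReal.ofReal (∑' n, q n ^ 2) *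
        ∫⁻ x, ∫⁻ y, ENNReal.ofReal (K x y * f x * f y) ∂μ ∂μ := by
  simp only [ENNReal.ofReal_tsum_of_nonneg (fun n => sq_nonneg (q n)) hq_summable,
    ENNReal.ofReal_pow (hq _), ENNReal.ofReal_mul' (hf _)]
  refine sq_lintegral_mul_le_tsum_sq_mul_energy hi (p := fun n => ENNReal.ofReal (p n))
    (fun n => ENNReal.mul_ne_top ENNReal.ofReal_ne_top ENNReal.ofReal_ne_top)
    (fun x => ?_) (fun x y hxy => ?_) _
  · rw [← ENNReal.ofReal_mul (hq _)]
    exact ENNReal.ofReal_le_ofReal (hw x)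
  · rw [← ENNReal.ofReal_pow (hp _)]
    exact ENNReal.ofReal_le_ofReal (hK x y hxy)

end CauchySchwarzOnFibers

section Weight

lemma summable_sq_one_add_rpow_neg {α : ℝ} (hα : 1 / 2 < α) :
    Summable fun n : ℕ => ((1 + (n : ℝ)) ^ (-α)) ^ 2 := by
  have h : Summable fun n : ℕ => ((n + 1 : ℕ) : ℝ) ^ (-α * 2) :=
    (summable_nat_add_iff 1).mpr (Real.summable_nat_rpow.mpr (by linarith))
  refine h.congr fun n => ?_
  rw [← Real.rpow_mul_natCast (by positivity), Nat.cast_add_one, add_comm]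
  norm_cast

variable {r t : ℝ}

lemma exp_half_le_of_le_log_one_add (hr : 0 ≤ r) (ht : t ≤ log (1 + r)) :
    exp (t / 2) ≤ 2 ^ (1 / 4 : ℝ) * (1 + r ^ 2) ^ (1 / 4 : ℝ) := by
  have h_exp : exp t ≤ 1 + r := (le_log_iff_exp_le (by positivity)).mp ht
  calc exp (t / 2) = (exp t ^ 2) ^ (1 / 4 : ℝ) := by
        rw [← exp_nat_mul, ← exp_mul]
        ring_nf
    _ ≤ (2 * (1 + r ^ 2)) ^ (1 / 4 : ℝ) := by
        gcongr
        calc exp t ^ 2 ≤ (1 + r) ^ 2 := by gcongr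
          _ ≤ 2 * (1 + r ^ 2) := by simpa only [one_pow] using add_sq_le (a := 1) (b := r)
    _ = 2 ^ (1 / 4 : ℝ) * (1 + r ^ 2) ^ (1 / 4 : ℝ) := mul_rpow (by norm_num) (by positivity)

lemma log_one_add_le_log_two_add_abs_log (hr : 0 ≤ r) : log (1 + r) ≤ log 2 + |log r| := by
  rcases le_total r 1 with hr1 | hr1
  · exact (log_le_log (by positivity) (by linarith)).trans
      (le_add_of_nonneg_right (abs_nonneg _))
  · calc log (1 + r) ≤ log (2 * r) := log_le_log (by positivity) (by linarith)
      _ = log 2 + log r := log_mul (by norm_num) (by positivity)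
      _ ≤ log 2 + |log r| := by gcongr; exact le_abs_self _

lemma inv_weight_le {α : ℝ} (hα : 0 ≤ α) (hr : 0 ≤ r) (ht0 : 0 ≤ t) (ht : t ≤ log (1 + r)) :
    ((1 + r ^ 2) ^ (1 / 4 : ℝ) * (1 + |log r|) ^ α)⁻¹ ≤
      2 ^ (1 / 4 : ℝ) * 2 ^ α * (1 + t) ^ (-α) * exp (-t / 2) := by
  have h_log : (1 + t) ^ α ≤ 2 ^ α * (1 + |log r|) ^ α := by
    rw [← mul_rpow (by norm_num) (by positivity)]
    gcongr
    linarith [log_one_add_le_log_two_add_abs_log hr, log_two_lt_d9, abs_nonneg (log r)]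
  have h_mul : exp (t / 2) * (1 + t) ^ α ≤
      2 ^ (1 / 4 : ℝ) * 2 ^ α * ((1 + r ^ 2) ^ (1 / 4 : ℝ) * (1 + |log r|) ^ α) :=
    (mul_le_mul (exp_half_le_of_le_log_one_add hr ht) h_log (by positivity)
      (by positivity)).trans_eq (by ring)
  calc ((1 + r ^ 2) ^ (1 / 4 : ℝ) * (1 + |log r|) ^ α)⁻¹
      ≤ 2 ^ (1 / 4 : ℝ) * 2 ^ α / (exp (t / 2) * (1 + t) ^ α) := by
        rwa [inv_eq_one_div, div_le_div_iff₀ (by positivity) (by positivity), one_mul]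
    _ = 2 ^ (1 / 4 : ℝ) * 2 ^ α * (1 + t) ^ (-α) * exp (-t / 2) := by
        rw [rpow_neg (by positivity), neg_div, exp_neg]
        field_simp

end Weight

section LogShell

variable {E : Type*} [SeminormedAddCommGroup E]

/-- The index `n` of the exponential shell `e ^ n ≤ 1 + ‖x‖ < e ^ (n + 1)` containing `x`. The shift
by `1` makes the unit ball part of the `0`-th shell. -/
def logShell (x : E) : ℕ := ⌊log (1 + ‖x‖)⌋₊

lemma measurable_logShell [MeasurableSpace E] [OpensMeasurableSpace E] :
    Measurable (logShell : E → ℕ) :=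
  Nat.measurable_floor.comp (measurable_log.comp (continuous_norm.measurable.const_add 1))

lemma logShell_le_log (x : E) : (logShell x : ℝ) ≤ log (1 + ‖x‖) :=
  Nat.floor_le (log_nonneg (le_add_of_nonneg_right (norm_nonneg x)))

lemma one_add_norm_lt_exp_logShell (x : E) : 1 + ‖x‖ < exp (logShell x) * exp 1 := by
  rw [← exp_add, ← log_lt_iff_lt_exp (by positivity)]
  exact Nat.lt_floor_add_one _

lemma add_norm_sub_le_of_logShell_eq {a : ℝ} (ha : 0 ≤ a) {x y : E}
    (hxy : logShell x = logShell y) :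
    a + ‖x - y‖ ≤ (a + 2 * exp 1) * exp (logShell x) := by
  have hx := one_add_norm_lt_exp_logShell x
  have hy := one_add_norm_lt_exp_logShell y
  rw [← hxy] at hy
  have ha_le : a ≤ a * exp (logShell x) :=
    le_mul_of_one_le_right ha (one_le_exp (Nat.cast_nonneg _))
  linarith [norm_sub_le x y]

lemma sq_exp_neg_half_logShell_div_le {a : ℝ} (ha : 0 < a) {x y : E}
    (hxy : logShell x = logShell y) :
    (exp (-logShell x / 2) / √(a + 2 * exp 1)) ^ 2 ≤ 1 / (a + ‖x - y‖) := by
  calc (exp (-logShell x / 2) / √(a + 2 * exp 1)) ^ 2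
      = 1 / ((a + 2 * exp 1) * exp (logShell x)) := by
        rw [div_pow, sq_sqrt (by positivity), ← exp_nat_mul, Nat.cast_ofNat,
          mul_div_cancel₀ _ two_ne_zero, exp_neg]
        field_simp
    _ ≤ 1 / (a + ‖x - y‖) :=
        one_div_le_one_div_of_le (by positivity) (add_norm_sub_le_of_logShell_eq ha.le hxy)

end LogShell

lemma one_div_add_norm_le_Ka {a : ℝ} (ha : 0 < a) (x : E3) : 1 / (a + ‖x‖) ≤ Ka a x := by
  rcases eq_or_ne x 0 with rfl | hx
  · simp [Ka]
  have hx_pos : 0 < ‖x‖ := norm_pos_iff.mpr hx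
  have h_exp : exp (-‖x‖ / a) ≤ a / (a + ‖x‖) :=
    calc exp (-‖x‖ / a) = (exp (‖x‖ / a))⁻¹ := by rw [neg_div, exp_neg]
      _ ≤ (‖x‖ / a + 1)⁻¹ := inv_anti₀ (by positivity) (add_one_le_exp _)
      _ = a / (a + ‖x‖) := by field_simp; ring
  rw [Ka, if_neg hx, le_div_iff₀ hx_pos]
  calc 1 / (a + ‖x‖) * ‖x‖ = 1 - a / (a + ‖x‖) := by field_simp; ring
    _ ≤ 1 - exp (-‖x‖ / a) := by gcongr

theorem energy_weighted_lower_bound_param_general {E : Type*} [SeminormedAddCommGroup E]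
    [MeasurableSpace E] [OpensMeasurableSpace E] {a α : ℝ} (ha : 0 < a) (hα : 1 / 2 < α) :
    ∃ C : ℝ, 0 < C ∧ ∀ (μ : Measure E) (K : E → E → ℝ), (∀ x y, 1 / (a + ‖x - y‖) ≤ K x y) →
      ∀ u : E → ℝ,
        ENNReal.ofReal C *
          (∫⁻ x, ENNReal.ofReal
            (u x ^ 2 / ((1 + ‖x‖ ^ 2) ^ (1 / 4 : ℝ) * (1 + |log ‖x‖|) ^ α)) ∂μ) ^ 2
          ≤ ∫⁻ x, ∫⁻ y, ENNReal.ofReal (K x y * u x ^ 2 * u y ^ 2) ∂μ ∂μ := by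
  let L : ℝ := √(a + 2 * exp 1)
  have hL : 0 < L := by positivity
  let p : ℕ → ℝ := fun n => exp (-n / 2) / L
  let q : ℕ → ℝ := fun n => L * (2 ^ (1 / 4 : ℝ) * 2 ^ α) * (1 + n) ^ (-α)
  have hq (n : ℕ) : 0 < q n := by positivity
  have hq_summable : Summable fun n => q n ^ 2 := by
    simpa only [q, mul_pow] using (summable_sq_one_add_rpow_neg hα).mul_left _
  have hS : 0 < ∑' n, q n ^ 2 :=
    hq_summable.tsum_pos (fun n => sq_nonneg _) 0 (pow_pos (hq 0) 2)
  have hw (x : E) : ((1 + ‖x‖ ^ 2) ^ (1 / 4 : ℝ) * (1 + |log ‖x‖|) ^ α)⁻¹ ≤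
      q (logShell x) * p (logShell x) := by
    refine (inv_weight_le (by linarith) (norm_nonneg x) (Nat.cast_nonneg _)
      (logShell_le_log x)).trans_eq ?_
    simp only [p, q]
    field_simp
  refine ⟨(∑' n, q n ^ 2)⁻¹, inv_pos.mpr hS, fun μ K hK u => ?_⟩
  rw [ENNReal.ofReal_inv_of_pos hS,
    ENNReal.inv_mul_le_iff (ENNReal.ofReal_pos.mpr hS).ne' ENNReal.ofReal_ne_top]
  simp only [div_eq_inv_mul (u _ ^ 2)]
  exact sq_lintegral_ofReal_mul_le_tsum_sq_mul_energy measurable_logShell (fun n => by positivity)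
    (fun n => (hq n).le) hq_summable hw
    (fun x y hxy => (sq_exp_neg_half_logShell_div_le ha hxy).trans (hK x y)) fun x => sq_nonneg _

/-- General lower bound for the Bopp–Podolsky energy, arbitrary parameter `a`:
for `a > 0` and `α > 1/2` there is `C = C(a,α) > 0` such that for every measurable `u`,
`V_a(u²,u²) ≥ C (∫ u(x)² / ((1+‖x‖²)^{1/4} (1+|log ‖x‖|)^α) dx)²` in `[0,∞]`. -/
theorem energy_weighted_lower_bound_param (a : ℝ) (ha : 0 < a) (α : ℝ) (hα : 1 / 2 < α) :
    ∃ C : ℝ, 0 < C ∧ ∀ u : E3 → ℝ, Measurable u →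
      ENNReal.ofReal C *
        (∫⁻ x, ENNReal.ofReal
          (u x ^ 2 / (((1 : ℝ) + ‖x‖ ^ 2) ^ ((1 : ℝ) / 4) * (1 + |Real.log ‖x‖|) ^ α))) ^ 2
        ≤ Vlina a (fun x => u x ^ 2) (fun x => u x ^ 2) := by
  obtain ⟨C, hC, hbound⟩ := energy_weighted_lower_bound_param_general (E := E3) ha hα
  exact ⟨C, hC, fun u _ => hbound volume _ (fun x y => one_div_add_norm_le_Ka ha (x - y)) u⟩
end
end

section
/- (Fourth-root triangle inequality for the Bopp–Podolsky energy.) Let K : ℝ³ → ℝ be defined by K(x) = (1 - exp(-‖x‖))/‖x‖ for x ≠ 0 and K(0) = 1, and set V(f,g) = ∫_{ℝ³}∫_{ℝ³} K(x-y) f(x) g(y) dx dy. If u, v : ℝ³ → ℝ are measurable with V(u²,u²) < ∞ and V(v²,v²) < ∞, then V((u+v)², (u+v)²) < ∞ and V((u+v)², (u+v)²)^{1/4} ≤ V(u²,u²)^{1/4} + V(v²,v²)^{1/4}; in other words, u ↦ V(u²,u²)^{1/4} satisfies the triangle inequality. -/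
open MeasureTheory Real
open scoped ENNReal Classical

noncomputable section

/-!
The kernel is a superposition of Gaussians, because `(1 - e⁻ʳ) / r = ∫₀¹ e⁻ˢʳ ds` and
`e⁻ᵗ = 𝔼[exp (-(t / p)² / 2)]` for a standard normal `p`; the latter holds because `p ↦ p - t / p`
preserves Lebesgue measure. A Gaussian being a convolution square of Gaussians, the kernel has the
form `∫ φ(m,x) φ(m,y) dν(m)` with `φ ≥ 0`, whence `V(u²,u²) = ∫ ‖u‖⁴ dν(m)`, where the norm is that
of `L²(φ(m,·) dx)`. The triangle inequality is then Minkowski's inequality in `L²(φ(m,·) dx)`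
followed by Minkowski's inequality in `L⁴(ν)`.
-/

section GramKernel

variable {X M G : Type*} [MeasurableSpace X] [MeasurableSpace M] [NormedAddCommGroup G]

/-- The energy `∬ k(x,y) ‖f x‖² ‖f y‖² dμ dμ`, quartic in `f`, as an iterated lower integral. -/
def quarticLEnergy (μ : Measure X) (k : X → X → ℝ) (f : X → G) : ℝ≥0∞ :=
  ∫⁻ x, ∫⁻ y, ENNReal.ofReal (k x y * ‖f x‖ ^ 2 * ‖f y‖ ^ 2) ∂μ ∂μ

/-- The energy `∬ k(x,y) ‖f x‖² ‖f y‖² dμ dμ`, quartic in `f`, as an iterated Bochner integral. -/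
def quarticEnergy (μ : Measure X) (k : X → X → ℝ) (f : X → G) : ℝ :=
  ∫ x, ∫ y, k x y * ‖f x‖ ^ 2 * ‖f y‖ ^ 2 ∂μ ∂μ

/-- `k` is the Gram kernel `k(x,y) = ∫ φ(m,x) φ(m,y) dν(m)` of a family of nonnegative measurable
functions. -/
structure IsGramKernel (k : X → X → ℝ) (φ : M → X → ℝ≥0∞) (ν : Measure M) : Prop where
  measurable : Measurable (Function.uncurry φ)
  nonneg : ∀ x y, 0 ≤ k x y
  ofReal_eq_lintegral : ∀ x y, ENNReal.ofReal (k x y) = ∫⁻ m, φ m x * φ m y ∂ν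

theorem lintegral_lintegral_lintegral_mul_eq_lintegral_sq {φ : M → X → ℝ≥0∞}
    (hφ : Measurable (Function.uncurry φ)) (ν : Measure M) [SFinite ν]
    (μ : Measure X) [SFinite μ] :
    ∫⁻ x, ∫⁻ y, ∫⁻ m, φ m x * φ m y ∂ν ∂μ ∂μ = ∫⁻ m, (∫⁻ x, φ m x ∂μ) ^ 2 ∂ν := by
  have hφm (m : M) : Measurable (φ m) := hφ.of_uncurry_left
  have hφ_swap : Measurable fun p : X × M ↦ φ p.2 p.1 := hφ.comp measurable_swap
  have hφ_int : Measurable fun m ↦ ∫⁻ y, φ m y ∂μ := hφ.lintegral_prod_right'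
  calc ∫⁻ x, ∫⁻ y, ∫⁻ m, φ m x * φ m y ∂ν ∂μ ∂μ
      = ∫⁻ x, ∫⁻ m, φ m x * ∫⁻ y, φ m y ∂μ ∂ν ∂μ := by
        refine lintegral_congr fun x ↦ ?_
        have hφx : Measurable fun m ↦ φ m x := hφ.of_uncurry_right
        rw [lintegral_lintegral_swap
          ((hφx.comp measurable_snd).mul hφ_swap).aemeasurable]
        exact lintegral_congr fun m ↦ lintegral_const_mul _ (hφm m)
    _ = ∫⁻ m, ∫⁻ x, φ m x * ∫⁻ y, φ m y ∂μ ∂μ ∂ν :=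
        lintegral_lintegral_swap (hφ_swap.mul (hφ_int.comp measurable_snd)).aemeasurable
    _ = ∫⁻ m, (∫⁻ x, φ m x ∂μ) ^ 2 ∂ν :=
        lintegral_congr fun m ↦ by rw [lintegral_mul_const _ (hφm m), sq]

theorem lintegral_withDensity_enorm_sq_eq_eLpNorm_sq {μ : Measure X} {w : X → ℝ≥0∞} {f : X → G}
    (hw : Measurable w) (hf : AEStronglyMeasurable f μ) :
    ∫⁻ x, w x ∂μ.withDensity (fun x ↦ ‖f x‖ₑ ^ 2) = eLpNorm f 2 (μ.withDensity w) ^ 2 := by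
  have hf_sq : AEMeasurable (fun x ↦ ‖f x‖ₑ ^ 2) μ := hf.enorm.pow_const 2
  have h_eLpNorm := eLpNorm_nnreal_pow_eq_lintegral (f := f) (μ := μ.withDensity w)
    (p := 2) two_ne_zero
  simp only [ENNReal.coe_ofNat, NNReal.coe_ofNat, ENNReal.rpow_ofNat] at h_eLpNorm
  rw [h_eLpNorm, lintegral_withDensity_eq_lintegral_mul₀ hf_sq hw.aemeasurable,
    lintegral_withDensity_eq_lintegral_mul₀ hw.aemeasurable hf_sq, mul_comm]

theorem measurable_eLpNorm_withDensity {φ : M → X → ℝ≥0∞} (hφ : Measurable (Function.uncurry φ))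
    {μ : Measure X} [SFinite μ] {f : X → G} (hf : AEStronglyMeasurable f μ) :
    Measurable fun m ↦ eLpNorm f 2 (μ.withDensity (φ m)) := by
  have h_sqrt : (fun m ↦ eLpNorm f 2 (μ.withDensity (φ m))) =
      fun m ↦ (∫⁻ x, φ m x ∂μ.withDensity (fun x ↦ ‖f x‖ₑ ^ 2)) ^ (1 / 2 : ℝ) := by
    ext m
    rw [lintegral_withDensity_enorm_sq_eq_eLpNorm_sq hφ.of_uncurry_left hf,
      ← ENNReal.rpow_ofNat, ← ENNReal.rpow_mul]
    norm_num
  rw [h_sqrt]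
  exact hφ.lintegral_prod_right'.pow_const _

theorem quarticLEnergy_eq_lintegral_withDensity {k : X → X → ℝ}
    (hk : Measurable (Function.uncurry k)) (hk_nonneg : ∀ x y, 0 ≤ k x y) {μ : Measure X}
    [SFinite μ] {f : X → G} (hf : AEStronglyMeasurable f μ) :
    quarticLEnergy μ k f = ∫⁻ x, ∫⁻ y, ENNReal.ofReal (k x y)
      ∂μ.withDensity (fun x ↦ ‖f x‖ₑ ^ 2) ∂μ.withDensity (fun x ↦ ‖f x‖ₑ ^ 2) := by
  have hf_sq : AEMeasurable (fun x ↦ ‖f x‖ₑ ^ 2) μ := hf.enorm.pow_const 2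
  have hk_ofReal : Measurable fun p : X × X ↦ ENNReal.ofReal (k p.1 p.2) := hk.ennreal_ofReal
  rw [lintegral_withDensity_eq_lintegral_mul₀ hf_sq hk_ofReal.lintegral_prod_right'.aemeasurable]
  refine lintegral_congr fun x ↦ ?_
  have hkx : Measurable fun y ↦ ENNReal.ofReal (k x y) := hk.of_uncurry_left.ennreal_ofReal
  rw [Pi.mul_apply, lintegral_withDensity_eq_lintegral_mul₀ hf_sq hkx.aemeasurable,
    ← lintegral_const_mul' _ _ (by finiteness)]
  refine lintegral_congr fun y ↦ ?_
  have h_enorm_sq (z : X) : ENNReal.ofReal (‖f z‖ ^ 2) = ‖f z‖ₑ ^ 2 := by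
    rw [ENNReal.ofReal_pow (norm_nonneg _), ofReal_norm]
  have hk0 := hk_nonneg x y
  rw [ENNReal.ofReal_mul (by positivity), ENNReal.ofReal_mul hk0, h_enorm_sq, h_enorm_sq,
    Pi.mul_apply]
  ring

theorem quarticEnergy_eq_toReal {k : X → X → ℝ} (hk : Measurable (Function.uncurry k))
    (hk_nonneg : ∀ x y, 0 ≤ k x y) {μ : Measure X} [SFinite μ] {f : X → G}
    (hf : AEStronglyMeasurable f μ) (h_lt : quarticLEnergy μ k f < ⊤) :
    quarticEnergy μ k f = (quarticLEnergy μ k f).toReal := by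
  have h_meas : AEMeasurable (fun p : X × X ↦
      ENNReal.ofReal (k p.1 p.2 * ‖f p.1‖ ^ 2 * ‖f p.2‖ ^ 2)) (μ.prod μ) :=
    ((hk.aemeasurable.mul (hf.comp_fst.norm.aemeasurable.pow_const 2)).mul
      (hf.comp_snd.norm.aemeasurable.pow_const 2)).ennreal_ofReal
  unfold quarticEnergy quarticLEnergy at *
  rw [← integral_toReal h_meas.lintegral_prod_right' (ae_lt_top' h_meas.lintegral_prod_right'
    h_lt.ne)]
  refine integral_congr_ae (.of_forall fun x ↦ integral_eq_lintegral_of_nonneg_ae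
    (.of_forall fun y ↦ ?_) ?_)
  · have hk0 := hk_nonneg x y
    positivity
  · exact ((hk.of_uncurry_left.mul_const _).aestronglyMeasurable).mul (hf.norm.pow 2)

namespace IsGramKernel

variable {k : X → X → ℝ} {φ : M → X → ℝ≥0∞} {ν : Measure M} [SFinite ν]
  {μ : Measure X} [SFinite μ] {f g : X → G}

theorem measurable_uncurry (hk : IsGramKernel k φ ν) : Measurable (Function.uncurry k) := by
  have h_eq : Function.uncurry k =
      fun p ↦ (∫⁻ m, φ m p.1 * φ m p.2 ∂ν).toReal := by
    ext p
    rw [← hk.ofReal_eq_lintegral, ENNReal.toReal_ofReal (hk.nonneg _ _), Function.uncurry]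
  rw [h_eq]
  refine (Measurable.lintegral_prod_right' (f := fun p : (X × X) × M ↦
    φ p.2 p.1.1 * φ p.2 p.1.2) ?_).ennreal_toReal
  exact (hk.measurable.comp (by fun_prop : Measurable fun p : (X × X) × M ↦ (p.2, p.1.1))).mul
    (hk.measurable.comp (by fun_prop : Measurable fun p : (X × X) × M ↦ (p.2, p.1.2)))

theorem quarticLEnergy_eq_lintegral_eLpNorm_pow (hk : IsGramKernel k φ ν)
    (hf : AEStronglyMeasurable f μ) :
    quarticLEnergy μ k f = ∫⁻ m, eLpNorm f 2 (μ.withDensity (φ m)) ^ (4 : ℝ) ∂ν := by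
  simp only [quarticLEnergy_eq_lintegral_withDensity hk.measurable_uncurry hk.nonneg hf,
    hk.ofReal_eq_lintegral]
  rw [lintegral_lintegral_lintegral_mul_eq_lintegral_sq hk.measurable]
  refine lintegral_congr fun m ↦ ?_
  rw [lintegral_withDensity_enorm_sq_eq_eLpNorm_sq hk.measurable.of_uncurry_left hf, ← pow_mul]
  norm_cast

theorem quarticLEnergy_add_rpow_le (hk : IsGramKernel k φ ν) (hf : AEStronglyMeasurable f μ)
    (hg : AEStronglyMeasurable g μ) :
    quarticLEnergy μ k (f + g) ^ (1 / 4 : ℝ) ≤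
      quarticLEnergy μ k f ^ (1 / 4 : ℝ) + quarticLEnergy μ k g ^ (1 / 4 : ℝ) := by
  rw [hk.quarticLEnergy_eq_lintegral_eLpNorm_pow hf, hk.quarticLEnergy_eq_lintegral_eLpNorm_pow hg,
    hk.quarticLEnergy_eq_lintegral_eLpNorm_pow (hf.add hg)]
  refine le_trans ?_ (ENNReal.lintegral_Lp_add_le
    (measurable_eLpNorm_withDensity hk.measurable hf).aemeasurable
    (measurable_eLpNorm_withDensity hk.measurable hg).aemeasurable (by norm_num : (1 : ℝ) ≤ 4))
  gcongr with m
  have h_ac : μ.withDensity (φ m) ≪ μ := withDensity_absolutelyContinuous _ _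
  exact eLpNorm_add_le (hf.mono_ac h_ac) (hg.mono_ac h_ac) one_le_two

end IsGramKernel

theorem energy_fourth_root_triangle_general {k : X → X → ℝ} {φ : M → X → ℝ≥0∞} {ν : Measure M}
    [SFinite ν] {μ : Measure X} [SFinite μ] {f g : X → G} (hk : IsGramKernel k φ ν)
    (hf : AEStronglyMeasurable f μ) (hg : AEStronglyMeasurable g μ)
    (hf_lt : quarticLEnergy μ k f < ⊤) (hg_lt : quarticLEnergy μ k g < ⊤) :
    quarticLEnergy μ k (f + g) < ⊤ ∧
      quarticEnergy μ k (f + g) ^ (1 / 4 : ℝ) ≤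
        quarticEnergy μ k f ^ (1 / 4 : ℝ) + quarticEnergy μ k g ^ (1 / 4 : ℝ) := by
  have h_tri := hk.quarticLEnergy_add_rpow_le hf hg
  have h_lt : quarticLEnergy μ k (f + g) < ⊤ := by
    rw [← ENNReal.rpow_lt_top_iff_of_pos (by norm_num : (0 : ℝ) < 1 / 4)]
    exact h_tri.trans_lt (by finiteness)
  refine ⟨h_lt, ?_⟩
  have h_toReal {h : X → G} (hh : AEStronglyMeasurable h μ) (hh_lt : quarticLEnergy μ k h < ⊤) :
      quarticEnergy μ k h = (quarticLEnergy μ k h).toReal :=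
    quarticEnergy_eq_toReal hk.measurable_uncurry hk.nonneg hh hh_lt
  rw [h_toReal hf hf_lt, h_toReal hg hg_lt, h_toReal (hf.add hg) h_lt,
    ENNReal.toReal_rpow, ENNReal.toReal_rpow, ENNReal.toReal_rpow,
    ← ENNReal.toReal_add (by finiteness) (by finiteness)]
  exact ENNReal.toReal_mono (by finiteness) h_tri

end GramKernel

section GaussianWindow

variable {E : Type*} [NormedAddCommGroup E] [InnerProductSpace ℝ E]

/-- The Gaussian of rate `2c` centred at `z`, normalised in `L²` for `0 < c`. -/
def gaussianWindow (c : ℝ) (z x : E) : ℝ≥0∞ :=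
  ENNReal.ofReal ((4 * c / π) ^ (Module.finrank ℝ E / 4 : ℝ) * exp (-(2 * c * ‖x - z‖ ^ 2)))

theorem two_mul_norm_sub_sq_add_norm_sub_sq (x y z : E) :
    2 * (‖x - z‖ ^ 2 + ‖y - z‖ ^ 2) = ‖x - y‖ ^ 2 + 4 * ‖z - midpoint ℝ x y‖ ^ 2 := by
  have h := EuclideanGeometry.dist_sq_add_dist_sq_eq_two_mul_dist_midpoint_sq_add_half_dist_sq z x y
  simp only [dist_eq_norm, norm_sub_rev z x, norm_sub_rev z y] at h
  linear_combination 2 * h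

variable [MeasurableSpace E] [BorelSpace E]

theorem measurable_gaussianWindow [SecondCountableTopology E] {Ω : Type*} [MeasurableSpace Ω]
    {c : Ω → ℝ} {z x : Ω → E} (hc : Measurable c) (hz : Measurable z) (hx : Measurable x) :
    Measurable fun ω ↦ gaussianWindow (c ω) (z ω) (x ω) := by
  unfold gaussianWindow
  fun_prop

variable [FiniteDimensional ℝ E]

theorem lintegral_exp_neg_mul_sq_norm_sub {b : ℝ} (hb : 0 < b) (a : E) :
    ∫⁻ z, ENNReal.ofReal (exp (-b * ‖z - a‖ ^ 2)) =
      ENNReal.ofReal ((π / b) ^ (Module.finrank ℝ E / 2 : ℝ)) := by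
  have h_integral := GaussianFourier.integral_rexp_neg_mul_sq_norm (V := E) hb
  have h_integrable : Integrable fun z : E ↦ exp (-b * ‖z‖ ^ 2) :=
    .of_integral_ne_zero (by rw [h_integral]; positivity)
  rw [lintegral_sub_right_eq_self (fun z ↦ ENNReal.ofReal (exp (-b * ‖z‖ ^ 2))), ← h_integral,
    ofReal_integral_eq_lintegral_ofReal h_integrable (.of_forall fun z ↦ (exp_pos _).le)]

theorem lintegral_gaussianWindow_mul_gaussianWindow {c : ℝ} (hc : 0 < c) (x y : E) :
    ∫⁻ z, gaussianWindow c z x * gaussianWindow c z y =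
      ENNReal.ofReal (exp (-(c * ‖x - y‖ ^ 2))) := by
  set d : ℝ := (Module.finrank ℝ E : ℝ)
  have h_norm : (4 * c / π) ^ (d / 4) * (4 * c / π) ^ (d / 4) * (π / (4 * c)) ^ (d / 2) = 1 := by
    rw [← rpow_add (by positivity), ← inv_div (4 * c), inv_rpow (by positivity),
      show d / 4 + d / 4 = d / 2 by ring]
    exact mul_inv_cancel₀ (by positivity)
  have h_mul (z : E) : gaussianWindow c z x * gaussianWindow c z y =
      ENNReal.ofReal ((4 * c / π) ^ (d / 4) * (4 * c / π) ^ (d / 4) * exp (-(c * ‖x - y‖ ^ 2))) *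
        ENNReal.ofReal (exp (-(4 * c) * ‖z - midpoint ℝ x y‖ ^ 2)) := by
    have h_exp : exp (-(2 * c * ‖x - z‖ ^ 2)) * exp (-(2 * c * ‖y - z‖ ^ 2)) =
        exp (-(c * ‖x - y‖ ^ 2)) * exp (-(4 * c) * ‖z - midpoint ℝ x y‖ ^ 2) := by
      rw [← exp_add, ← exp_add]
      congr 1
      linear_combination -c * two_mul_norm_sub_sq_add_norm_sub_sq x y z
    rw [gaussianWindow, gaussianWindow, ← ENNReal.ofReal_mul (by positivity),
      ← ENNReal.ofReal_mul (by positivity), mul_mul_mul_comm, h_exp, mul_assoc _ (exp _)]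
  simp only [h_mul]
  rw [lintegral_const_mul' _ _ ENNReal.ofReal_ne_top,
    lintegral_exp_neg_mul_sq_norm_sub (by positivity), ← ENNReal.ofReal_mul (by positivity)]
  congr 1
  linear_combination exp (-(c * ‖x - y‖ ^ 2)) * h_norm

theorem isGramKernel_of_gaussian_mixture {Ω : Type*} [MeasurableSpace Ω] {P : Measure Ω}
    {c : Ω → ℝ} (hc : Measurable c) (hc_pos : ∀ᵐ ω ∂P, 0 < c ω) {K : E → ℝ}
    (hK_nonneg : ∀ x, 0 ≤ K x)
    (hK : ∀ x, ENNReal.ofReal (K x) = ∫⁻ ω, ENNReal.ofReal (exp (-(c ω * ‖x‖ ^ 2))) ∂P) :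
    IsGramKernel (fun x y ↦ K (x - y)) (fun m : Ω × E ↦ gaussianWindow (c m.1) m.2)
      (P.prod volume) := by
  have : ProperSpace E := FiniteDimensional.proper ℝ E
  refine ⟨measurable_gaussianWindow (by fun_prop) (by fun_prop) (by fun_prop),
    fun x y ↦ hK_nonneg (x - y), fun x y ↦ ?_⟩
  have h_window (a : E) : Measurable fun m : Ω × E ↦ gaussianWindow (c m.1) m.2 a :=
    measurable_gaussianWindow (by fun_prop) measurable_snd measurable_const
  have h_mul : Measurable fun m : Ω × E ↦
      gaussianWindow (c m.1) m.2 x * gaussianWindow (c m.1) m.2 y := (h_window x).mul (h_window y)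
  rw [lintegral_prod _ h_mul.aemeasurable, hK]
  refine lintegral_congr_ae ?_
  filter_upwards [hc_pos] with ω hω
  exact (lintegral_gaussianWindow_mul_gaussianWindow hω x y).symm

end GaussianWindow

section Boole

variable {b : ℝ}

/-- The positive solution `p` of `p - b / p = t`. -/
def booleRoot (b t : ℝ) : ℝ := (t + √(t ^ 2 + 4 * b)) / 2

theorem abs_lt_sqrt_sq_add_four_mul (hb : 0 < b) (t : ℝ) : |t| < √(t ^ 2 + 4 * b) := by
  rw [← sqrt_sq_eq_abs]
  exact sqrt_lt_sqrt (sq_nonneg t) (by linarith)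

theorem booleRoot_pos (hb : 0 < b) (t : ℝ) : 0 < booleRoot b t := by
  have h := abs_lt_sqrt_sq_add_four_mul hb t
  have h' := neg_abs_le t
  unfold booleRoot
  linarith

theorem booleRoot_sub_div (hb : 0 < b) (t : ℝ) : booleRoot b t - b / booleRoot b t = t := by
  have h_pos := booleRoot_pos hb t
  have h_sq : √(t ^ 2 + 4 * b) ^ 2 = t ^ 2 + 4 * b := sq_sqrt (by positivity)
  rw [sub_eq_iff_eq_add, ← sub_eq_iff_eq_add', eq_div_iff h_pos.ne', booleRoot]
  linear_combination h_sq / 4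

theorem booleRoot_of_sub_div (hb : 0 < b) {p : ℝ} (hp : 0 < p) :
    booleRoot b (p - b / p) = p := by
  have h_sq : (p - b / p) ^ 2 + 4 * b = (p + b / p) ^ 2 := by field_simp; ring
  rw [booleRoot, h_sq, sqrt_sq (by positivity)]
  ring

theorem image_booleRoot_univ (hb : 0 < b) : booleRoot b '' Set.univ = Set.Ioi 0 := by
  ext p
  constructor
  · rintro ⟨t, -, rfl⟩
    exact booleRoot_pos hb t
  · exact fun hp ↦ ⟨p - b / p, Set.mem_univ _, booleRoot_of_sub_div hb hp⟩

theorem hasDerivAt_booleRoot (hb : 0 < b) (t : ℝ) :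
    HasDerivAt (booleRoot b) ((1 + t / √(t ^ 2 + 4 * b)) / 2) t := by
  have h_sq : HasDerivAt (fun s ↦ s ^ 2 + 4 * b) (2 * t) t := by
    simpa using (hasDerivAt_pow 2 t).add_const (4 * b)
  have h_root := ((hasDerivAt_id t).add (h_sq.sqrt (by positivity))).div_const 2
  rwa [mul_div_mul_left _ _ two_ne_zero] at h_root

theorem abs_div_sqrt_sq_add_four_mul_le_one (hb : 0 < b) (t : ℝ) : |t / √(t ^ 2 + 4 * b)| ≤ 1 := by
  rw [abs_div, abs_of_nonneg (sqrt_nonneg _)]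
  exact div_le_one_of_le₀ (abs_lt_sqrt_sq_add_four_mul hb t).le (sqrt_nonneg _)

theorem setLIntegral_Ioi_comp_sub_div (hb : 0 < b) (f : ℝ → ℝ≥0∞) :
    ∫⁻ p in Set.Ioi 0, f (p - b / p) =
      ∫⁻ t, ENNReal.ofReal ((1 + t / √(t ^ 2 + 4 * b)) / 2) * f t := by
  have h_inj : Function.Injective (booleRoot b) :=
    Function.LeftInverse.injective (g := fun p ↦ p - b / p) (booleRoot_sub_div hb)
  rw [← image_booleRoot_univ hb, lintegral_image_eq_lintegral_abs_deriv_mul .univ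
    (fun t _ ↦ (hasDerivAt_booleRoot hb t).hasDerivWithinAt) h_inj.injOn, Measure.restrict_univ]
  refine lintegral_congr fun t ↦ ?_
  have h_abs := neg_le_of_abs_le (abs_div_sqrt_sq_add_four_mul_le_one hb t)
  rw [booleRoot_sub_div hb, abs_of_nonneg (by linarith)]

theorem lintegral_comp_sub_div (hb : 0 < b) {f : ℝ → ℝ≥0∞} (hf : Measurable f) :
    ∫⁻ p, f (p - b / p) = ∫⁻ t, f t := by
  -- On each of the half-lines `p > 0` and `p < 0` the equation `p - b / p = t` has one root;
  -- the derivatives of the two roots with respect to `t` add up to `1`.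
  have h_Iic : ∫⁻ p in Set.Iic 0, f (p - b / p) =
      ∫⁻ t, ENNReal.ofReal ((1 - t / √(t ^ 2 + 4 * b)) / 2) * f t := by
    calc ∫⁻ p in Set.Iic 0, f (p - b / p)
        = ∫⁻ p in Set.Ioi 0, f (-(p - b / p)) := by
          rw [← (Measure.measurePreserving_neg (volume : Measure ℝ)).setLIntegral_comp_preimage_emb
            (MeasurableEquiv.neg ℝ).measurableEmbedding, Set.neg_preimage, Set.neg_Iic, neg_zero,
            setLIntegral_congr Ioi_ae_eq_Ici.symm]
          simp only [div_neg, neg_sub, sub_neg_eq_add, neg_add_eq_sub]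
      _ = ∫⁻ t, ENNReal.ofReal ((1 + t / √(t ^ 2 + 4 * b)) / 2) * f (-t) :=
          setLIntegral_Ioi_comp_sub_div hb (fun t ↦ f (-t))
      _ = ∫⁻ t, ENNReal.ofReal ((1 - t / √(t ^ 2 + 4 * b)) / 2) * f t := by
          rw [← lintegral_neg_eq_self]
          simp only [neg_neg, neg_sq, neg_div, sub_eq_add_neg]
  rw [← lintegral_add_compl _ measurableSet_Ioi, Set.compl_Ioi, h_Iic,
    setLIntegral_Ioi_comp_sub_div hb, ← lintegral_add_left (by fun_prop)]
  refine lintegral_congr fun t ↦ ?_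
  obtain ⟨h_lower, h_upper⟩ := abs_le.1 (abs_div_sqrt_sq_add_four_mul_le_one hb t)
  rw [← add_mul, ← ENNReal.ofReal_add (by linarith) (by linarith)]
  ring_nf
  simp

end Boole

section BoppPodolskyKernel

open ProbabilityTheory

theorem lintegral_exp_neg_sq_div_gaussianReal {t : ℝ} (ht : 0 ≤ t) :
    ∫⁻ p, ENNReal.ofReal (exp (-((t / p) ^ 2 / 2))) ∂gaussianReal 0 1 =
      ENNReal.ofReal (exp (-t)) := by
  rcases ht.eq_or_lt with rfl | ht
  · simp
  have h_pdf : ∀ᵐ p, gaussianPDF 0 1 p * ENNReal.ofReal (exp (-((t / p) ^ 2 / 2))) =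
      ENNReal.ofReal (exp (-t)) * gaussianPDF 0 1 (p - t / p) := by
    filter_upwards [Measure.ae_ne volume 0] with p hp
    have h_exponent : -(p - 0) ^ 2 / (2 * (1 : NNReal)) + -((t / p) ^ 2 / 2) =
        -t + -(p - t / p - 0) ^ 2 / (2 * (1 : NNReal)) := by
      push_cast
      field_simp
      ring
    rw [gaussianPDF, gaussianPDF, ← ENNReal.ofReal_mul (gaussianPDFReal_nonneg _ _ _),
      ← ENNReal.ofReal_mul (exp_pos _).le, gaussianPDFReal, gaussianPDFReal, mul_assoc, ← exp_add,
      h_exponent, exp_add, mul_left_comm]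
  rw [gaussianReal_of_var_ne_zero _ one_ne_zero,
    lintegral_withDensity_eq_lintegral_mul _ (measurable_gaussianPDF _ _) (by fun_prop)]
  simp only [Pi.mul_apply]
  rw [lintegral_congr_ae h_pdf, lintegral_const_mul' _ _ ENNReal.ofReal_ne_top,
    lintegral_comp_sub_div ht (measurable_gaussianPDF 0 1),
    lintegral_gaussianPDF_eq_one _ one_ne_zero, mul_one]

theorem K1_eq_integral (x : E3) : K1 x = ∫ s in (0 : ℝ)..1, exp (-(s * ‖x‖)) := by
  rw [K1]
  split_ifs with hx
  · simp [hx]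
  · have h_ne : -‖x‖ ≠ 0 := neg_ne_zero.2 (norm_ne_zero_iff.2 hx)
    simp only [← mul_neg]
    rw [intervalIntegral.integral_comp_mul_right _ h_ne, integral_exp, zero_mul, one_mul, exp_zero,
      smul_eq_mul, inv_neg, div_eq_inv_mul]
    ring

theorem K1_nonneg (x : E3) : 0 ≤ K1 x := by
  rw [K1_eq_integral]
  exact intervalIntegral.integral_nonneg zero_le_one fun s _ ↦ (exp_pos _).le

theorem ofReal_K1_eq_setLIntegral (x : E3) :
    ENNReal.ofReal (K1 x) = ∫⁻ s in Set.Ioc (0 : ℝ) 1, ENNReal.ofReal (exp (-(s * ‖x‖))) := by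
  have h_cont : Continuous fun s : ℝ ↦ exp (-(s * ‖x‖)) := by fun_prop
  rw [K1_eq_integral, intervalIntegral.integral_of_le zero_le_one]
  exact ofReal_integral_eq_lintegral_ofReal (h_cont.intervalIntegrable 0 1).1
    (.of_forall fun s ↦ (exp_pos _).le)

theorem ofReal_K1_eq_lintegral_gaussian (x : E3) :
    ENNReal.ofReal (K1 x) = ∫⁻ q, ENNReal.ofReal (exp (-((q.1 / q.2) ^ 2 / 2 * ‖x‖ ^ 2)))
      ∂(volume.restrict (Set.Ioc (0 : ℝ) 1)).prod (gaussianReal 0 1) := by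
  rw [ofReal_K1_eq_setLIntegral, lintegral_prod _ (by fun_prop)]
  refine setLIntegral_congr_fun measurableSet_Ioc fun s hs ↦ ?_
  have hs_nonneg : 0 ≤ s * ‖x‖ := mul_nonneg hs.1.le (norm_nonneg x)
  rw [← lintegral_exp_neg_sq_div_gaussianReal hs_nonneg]
  refine lintegral_congr fun p ↦ ?_
  ring_nf

theorem isGramKernel_K1 :
    IsGramKernel (fun x y ↦ K1 (x - y))
      (fun m : (ℝ × ℝ) × E3 ↦ gaussianWindow ((m.1.1 / m.1.2) ^ 2 / 2) m.2)
      (((volume.restrict (Set.Ioc (0 : ℝ) 1)).prod (gaussianReal 0 1)).prod volume) := by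
  refine isGramKernel_of_gaussian_mixture (c := fun q : ℝ × ℝ ↦ (q.1 / q.2) ^ 2 / 2)
    (by fun_prop) ?_ K1_nonneg ofReal_K1_eq_lintegral_gaussian
  have h_fst : ∀ᵐ q ∂(volume.restrict (Set.Ioc (0 : ℝ) 1)).prod (gaussianReal 0 1),
      q.1 ∈ Set.Ioc (0 : ℝ) 1 :=
    Measure.quasiMeasurePreserving_fst.ae (ae_restrict_mem measurableSet_Ioc)
  have h_snd : ∀ᵐ q ∂(volume.restrict (Set.Ioc (0 : ℝ) 1)).prod (gaussianReal 0 1), q.2 ≠ 0 :=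
    Measure.quasiMeasurePreserving_snd.ae
      ((gaussianReal_absolutelyContinuous 0 one_ne_zero).ae_le (Measure.ae_ne volume 0))
  filter_upwards [h_fst, h_snd] with q hq_fst hq_snd
  have hq_pos : 0 < q.1 := hq_fst.1
  positivity

theorem Vlin_sq_eq_quarticLEnergy (f : E3 → ℝ) :
    Vlin (fun x ↦ f x ^ 2) (fun x ↦ f x ^ 2) = quarticLEnergy volume (fun x y ↦ K1 (x - y)) f := by
  simp only [Vlin, quarticLEnergy, norm_eq_abs, sq_abs]

theorem Vr_sq_eq_quarticEnergy (f : E3 → ℝ) :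
    Vr (fun x ↦ f x ^ 2) (fun x ↦ f x ^ 2) = quarticEnergy volume (fun x y ↦ K1 (x - y)) f := by
  simp only [Vr, quarticEnergy, norm_eq_abs, sq_abs]

end BoppPodolskyKernel

/-- Fourth-root triangle inequality for the Bopp–Podolsky energy:
if `V(u²,u²) < ∞` and `V(v²,v²) < ∞`, then `V((u+v)²,(u+v)²) < ∞` and
`V((u+v)²,(u+v)²)^{1/4} ≤ V(u²,u²)^{1/4} + V(v²,v²)^{1/4}`. -/
theorem energy_fourth_root_triangle (u v : E3 → ℝ) (hu : Measurable u) (hv : Measurable v)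
    (hVu : Vlin (fun x => u x ^ 2) (fun x => u x ^ 2) < ⊤)
    (hVv : Vlin (fun x => v x ^ 2) (fun x => v x ^ 2) < ⊤) :
    Vlin (fun x => (u x + v x) ^ 2) (fun x => (u x + v x) ^ 2) < ⊤ ∧
    (Vr (fun x => (u x + v x) ^ 2) (fun x => (u x + v x) ^ 2)) ^ ((1 : ℝ) / 4) ≤
      (Vr (fun x => u x ^ 2) (fun x => u x ^ 2)) ^ ((1 : ℝ) / 4) +
      (Vr (fun x => v x ^ 2) (fun x => v x ^ 2)) ^ ((1 : ℝ) / 4) := by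
  simp only [Vlin_sq_eq_quarticLEnergy, Vr_sq_eq_quarticEnergy] at hVu hVv ⊢
  exact energy_fourth_root_triangle_general isGramKernel_K1 hu.aestronglyMeasurable
    hv.aestronglyMeasurable hVu hVv
end
end
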